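/- Let C be a linear code of length n over F_q. Suppose the automorphism group of C is t-transitive, i.e., for every pair of ordered t-tuples of distinct coordinate positions there exist a permutation π of the n coordinate positions, nonzero scalars d_1,…,d_n ∈ F_q^*, and a field automorphism γ of F_q such that the monomial map sending (c_1,…,c_n) to the vector whose i-th coordinate is d_i·γ(c_{π(i)}) maps C onto C and π sends the first t-tuple to the second. Then for every integer i with i ≥ t, the supports of the codewords of Hamming weight i in C form a t-design: the number of distinct supports of weight-i codewords containing a given t-element subset of the coordinate positions is the same for every t-element subset. -/

import Mathlib

open Polynomial Finset

/-- Let `C` be a linear code of length `n` over `F_q` whose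
automorphism group is `t`-transitive: for every pair of ordered `t`-tuples of distinct
coordinate positions there are a coordinate permutation `π`, nonzero scalars `d_i`, and a
field automorphism `γ` such that the monomial map `c ↦ (i ↦ d_i·γ(c_{π(i)}))` maps `C`
onto `C` and `π` sends the first tuple to the second. Then for every `i ≥ t`, the
supports of the weight-`i` codewords of `C` form a `t`-design. -/
theorem designs_from_transitive_automorphism_group
    (q n t : ℕ) (hq : ∃ p r : ℕ, p.Prime ∧ 0 < r ∧ q = p ^ r)
    (F : Type) [Field F] [Fintype F] [DecidableEq F] (hF : Fintype.card F = q)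
    (C : Submodule F (Fin n → F))
    (htrans : ∀ a b : Fin t → Fin n, Function.Injective a → Function.Injective b →
      ∃ (π : Equiv.Perm (Fin n)) (d : Fin n → Fˣ) (γ : F ≃+* F),
        (fun c : Fin n → F => fun i => (d i : F) * γ (c (π i))) '' (C : Set (Fin n → F)) =
          (C : Set (Fin n → F)) ∧
        ∀ k, π (a k) = b k) :
    ∀ i, t ≤ i →
      ∃ lam, ∀ T : Finset (Fin n), T.card = t →
        {S : Set (Fin n) |
          (∃ c ∈ C, hammingNorm c = i ∧ S = {j | c j ≠ 0}) ∧ ↑T ⊆ S}.ncard = lam := by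
  intro i _
  have key : ∀ T₁ T₂ : Finset (Fin n), T₁.card = t → T₂.card = t →
      {S : Set (Fin n) |
          (∃ c ∈ C, hammingNorm c = i ∧ S = {j | c j ≠ 0}) ∧ ↑T₂ ⊆ S}.ncard ≤
      {S : Set (Fin n) |
          (∃ c ∈ C, hammingNorm c = i ∧ S = {j | c j ≠ 0}) ∧ ↑T₁ ⊆ S}.ncard := by
    intro T₁ T₂ h₁ h₂
    obtain ⟨π, d, γ, hC, hπ⟩ := htrans (T₁.orderEmbOfFin h₁) (T₂.orderEmbOfFin h₂)
      (T₁.orderEmbOfFin h₁).injective (T₂.orderEmbOfFin h₂).injective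
    refine Set.ncard_le_ncard_of_injOn (fun S => π ⁻¹' S) ?_ ?_ (Set.toFinite _)
    · rintro S ⟨⟨c, hc, hw, rfl⟩, hT⟩
      refine ⟨⟨fun j => (d j : F) * γ (c (π j)), ?_, ?_, ?_⟩, ?_⟩
      · have : (fun j => (d j : F) * γ (c (π j))) ∈ (C : Set (Fin n → F)) := by
          rw [← hC]
          exact ⟨c, hc, rfl⟩
        exact this
      · rw [← hw]
        unfold hammingNorm
        refine Finset.card_bij (fun j _ => π j) ?_ ?_ ?_
        · intro j hj
          simpa using hj
        · intro j _ k _ h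
          exact π.injective h
        · intro j hj
          exact ⟨π.symm j, by simpa using hj, by simp⟩
      · ext j
        simp
      · intro j hj
        have hj' : j ∈ Set.range (T₁.orderEmbOfFin h₁) := by
          rw [Finset.range_orderEmbOfFin]
          exact hj
        obtain ⟨k, rfl⟩ := hj'
        have hk : T₂.orderEmbOfFin h₂ k ∈ T₂ := Finset.orderEmbOfFin_mem T₂ h₂ k
        have := hT (Finset.mem_coe.2 hk)
        rw [← hπ k] at this
        exact this
    · intro S _ S' _ h
      exact π.surjective.preimage_injective h
  by_cases hex : ∃ T₀ : Finset (Fin n), T₀.card = t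
  · obtain ⟨T₀, h₀⟩ := hex
    exact ⟨_, fun T hT => le_antisymm (key T₀ T h₀ hT) (key T T₀ hT h₀)⟩
  · exact ⟨0, fun T hT => (hex ⟨T, hT⟩).elim⟩
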